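/- Let 𝐃 be a finite collection of pairwise disjoint tiles (disjoint as rectangles in the phase plane), and define S_𝐃 f(x) := ( Σ_{p ∈ 𝐃} |⟨f, φ_p⟩|² 1_{I_p}(x)/|I_p| )^{1/2}. Then there is an absolute constant C such that pointwise (S_𝐃 f)^♯(x) ≤ C M_2 f(x) for every f ∈ L²_loc, where g^♯(x) := sup_{dyadic J ∋ x} inf_{c ∈ ℝ} |J|^{−1} ∫_J |g(y) − c| dy is the dyadic sharp maximal function and M_2 f(x) := sup_{dyadic J ∋ x} ( |J|^{−1} ∫_J |f(y)|² dy )^{1/2}. -/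

import Mathlib

open MeasureTheory Set
open scoped ENNReal NNReal Classical

noncomputable section
namespace Paper

/-- The Walsh functions `W_k`, supported on `[0,1)`. -/
def walsh (k : ℕ) (x : ℝ) : ℝ :=
  if h : k = 0 then (if 0 ≤ x ∧ x < 1 then (1:ℝ) else 0)
  else walsh (k / 2) (2 * x) + (if k % 2 = 0 then (1:ℝ) else -1) * walsh (k / 2) (2 * x - 1)
termination_by k
decreasing_by all_goals exact Nat.div_lt_self (Nat.pos_of_ne_zero h) one_lt_two

/-- The dyadic interval `[2^j m, 2^j (m+1))`. -/
def dyadicI (j m : ℤ) : Set ℝ := Ico ((2:ℝ)^j * (m:ℝ)) ((2:ℝ)^j * ((m:ℝ)+1))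

/-- A weight: positive a.e. and locally integrable. -/
def IsWeight (w : ℝ → ℝ) : Prop :=
  (∀ᵐ x ∂(volume : Measure ℝ), 0 < w x) ∧ LocallyIntegrable w volume

/-- The measure `w(x) dx`. -/
def wMeasure (w : ℝ → ℝ) : Measure ℝ := volume.withDensity fun x => ENNReal.ofReal (w x)

/-- `[w]_{A_p} ≤ A` over dyadic intervals, for `1 < p`. -/
def ApBoundedBy (w : ℝ → ℝ) (p A : ℝ) : Prop :=
  ∀ j m : ℤ,
    ((2:ℝ)^(-j) * ∫ x in dyadicI j m, w x) *
      ((2:ℝ)^(-j) * ∫ x in dyadicI j m, w x ^ (-1/(p-1)))^(p-1) ≤ A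

/-- `[w]_{A_1} ≤ A` over dyadic intervals. -/
def A1BoundedBy (w : ℝ → ℝ) (A : ℝ) : Prop :=
  ∀ j m : ℤ,
    (2:ℝ)^(-j) * ∫ x in dyadicI j m, w x ≤ A * essInf w (volume.restrict (dyadicI j m))

/-- `w ∈ A_q` for `q ∈ [1,∞)`, covering also the case `q = 1`. -/
def MemAq (w : ℝ → ℝ) (q : ℝ) : Prop :=
  IsWeight w ∧ ((q = 1 ∧ ∃ A, A1BoundedBy w A) ∨ (1 < q ∧ ∃ A, ApBoundedBy w q A))

/-- `⟨f,g⟩ = ∫_0^1 f g`. -/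
def inner01 (f g : ℝ → ℝ) : ℝ := ∫ x in Ico (0:ℝ) 1, f x * g x

/-- Walsh--Fourier partial sums, `S_n f = 0` for `n < 0`. -/
def walshSum (f : ℝ → ℝ) (n : ℤ) (x : ℝ) : ℝ :=
  if n < 0 then 0
  else ∑ k ∈ Finset.range (n.toNat + 1), inner01 f (walsh k) * walsh k x

/-- Pointwise `r`-variation sup over all finite increasing integer sequences. -/
def varNormE (r : ℝ) (u : ℤ → ℝ) : ℝ≥0∞ :=
  ⨆ (M : ℕ) (N : Fin (M + 1) → ℤ) (_ : StrictMono N),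
    ENNReal.ofReal ((∑ j : Fin M, |u (N j.succ) - u (N j.castSucc)| ^ r) ^ (1 / r))

/-- A tile `[2^j m, 2^j (m+1)) × [2^{-j} n, 2^{-j}(n+1))`. -/
structure Tile where
  j : ℤ
  m : ℕ
  n : ℕ
deriving DecidableEq

namespace Tile
def timeI (p : Tile) : Set ℝ := Ico ((2:ℝ)^p.j * (p.m:ℝ)) ((2:ℝ)^p.j * ((p.m:ℝ)+1))
def freqI (p : Tile) : Set ℝ := Ico ((2:ℝ)^(-p.j) * (p.n:ℝ)) ((2:ℝ)^(-p.j) * ((p.n:ℝ)+1))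
def len (p : Tile) : ℝ := (2:ℝ)^p.j
def rect (p : Tile) : Set (ℝ × ℝ) := p.timeI ×ˢ p.freqI
/-- The order `p < q` on tiles: the tiles intersect and `I_p ⊆ I_q`. -/
def below (p q : Tile) : Prop := (p.rect ∩ q.rect).Nonempty ∧ p.timeI ⊆ q.timeI
/-- The Walsh packet of a tile. -/
def packet (p : Tile) (x : ℝ) : ℝ :=
  (2:ℝ) ^ (-(p.j:ℝ)/2) * walsh p.n ((2:ℝ)^(-p.j) * x - (p.m:ℝ))
end Tile

/-- A bitile `[2^j m, 2^j (m+1)) × [2^{1-j} n, 2^{1-j}(n+1))` (area 2). -/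
structure Bitile where
  j : ℤ
  m : ℕ
  n : ℕ
deriving DecidableEq

namespace Bitile
def timeI (P : Bitile) : Set ℝ := Ico ((2:ℝ)^P.j * (P.m:ℝ)) ((2:ℝ)^P.j * ((P.m:ℝ)+1))
def freqI (P : Bitile) : Set ℝ := Ico ((2:ℝ)^(1-P.j) * (P.n:ℝ)) ((2:ℝ)^(1-P.j) * ((P.n:ℝ)+1))
def len (P : Bitile) : ℝ := (2:ℝ)^P.j
def rect (P : Bitile) : Set (ℝ × ℝ) := P.timeI ×ˢ P.freqI
/-- The order `P < Q` on bitiles. -/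
def below (P Q : Bitile) : Prop := (P.rect ∩ Q.rect).Nonempty ∧ P.timeI ⊆ Q.timeI
/-- The lower tile `P_1`. -/
def lower (P : Bitile) : Tile := ⟨P.j, P.m, 2 * P.n⟩
/-- The upper tile `P_2`. -/
def upper (P : Bitile) : Tile := ⟨P.j, P.m, 2 * P.n + 1⟩
end Bitile

/-- A tree of bitiles with top `P_T`. -/
structure Tree where
  top : Bitile
  elems : Finset Bitile
  below_top : ∀ P ∈ elems, P.below top

/-- A tree is 2-overlapping if `P_2 < (P_T)_2` for all its members. -/
def Tree.TwoOverlapping (T : Tree) : Prop :=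
  ∀ P ∈ T.elems, (Bitile.upper P).below T.top.upper

/-- A tree is 1-overlapping if `P_1 < (P_T)_1` for all its members. -/
def Tree.OneOverlapping (T : Tree) : Prop :=
  ∀ P ∈ T.elems, (Bitile.lower P).below T.top.lower

/-- `⟨f, φ_p⟩`. -/
def pinner (f : ℝ → ℝ) (p : Tile) : ℝ := ∫ y, f y * p.packet y

/-- The tree square function `S_T f`. -/
def treeSq (f : ℝ → ℝ) (T : Tree) (x : ℝ) : ℝ :=
  Real.sqrt (∑ P ∈ T.elems,
    (pinner f P.lower)^2 * Set.indicator P.timeI (fun _ => (1:ℝ)) x / P.len)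

/-- The (weighted) size of a collection of bitiles: the least constant `C` with
`‖S_T f‖_{L²(w)} ≤ C w(I_T)^{1/2}` over all 2-overlapping trees in the collection,
realized as a supremum of ratios. -/
def size (w f : ℝ → ℝ) (Ps : Set Bitile) : ℝ≥0∞ :=
  ⨆ (T : Tree) (_ : (T.elems : Set Bitile) ⊆ Ps ∧ T.TwoOverlapping),
    eLpNorm (treeSq f T) 2 (wMeasure w) / (wMeasure w T.top.timeI) ^ (1/2 : ℝ)

/-- The coefficient `a_P(x)` built from linearizing data. -/
def coefP (M : ℝ → ℕ) (N : ℕ → ℝ → ℤ) (a : ℕ → ℝ → ℝ) (P : Bitile) (x : ℝ) : ℝ :=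
  ∑ j ∈ Finset.Icc 1 (M x),
    if ((N (j-1) x : ℝ)) ∉ P.freqI ∧ ((N j x : ℝ)) ∈ (Bitile.upper P).freqI then a j x else 0

/-- The (weighted) density of a collection of bitiles. -/
def density (w g : ℝ → ℝ) (r' : ℝ) (M : ℝ → ℕ) (N : ℕ → ℝ → ℤ) (a : ℕ → ℝ → ℝ)
    (Ps : Set Bitile) : ℝ≥0∞ :=
  ⨆ (P : Bitile) (_ : P ∈ Ps) (Q : Bitile) (_ : P.below Q),
    (ENNReal.ofReal (∫ x in Q.timeI,
        |g x| ^ r' * (∑ k ∈ Finset.Icc 1 (M x),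
          if ((N k x : ℝ)) ∈ Q.freqI then |a k x| ^ r' else 0) * w x)
      / wMeasure w Q.timeI) ^ (1/r')

/-- The bilinear form `B_Ps(f,g)`. -/
def bform (w f g : ℝ → ℝ) (M : ℝ → ℕ) (N : ℕ → ℝ → ℤ) (a : ℕ → ℝ → ℝ)
    (Ps : Finset Bitile) : ℝ :=
  ∑ P ∈ Ps, pinner f P.lower * ∫ x, P.lower.packet x * coefP M N a P x * g x * w x

/-- The linearized tree operator `C_T f`. -/
def treeOp (f : ℝ → ℝ) (M : ℝ → ℕ) (N : ℕ → ℝ → ℤ) (a : ℕ → ℝ → ℝ) (T : Tree) (x : ℝ) : ℝ :=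
  ∑ P ∈ T.elems, pinner f P.lower * P.lower.packet x * coefP M N a P x

/-- The Haar function of the dyadic interval `[2^j m, 2^j(m+1))`. -/
def haarFn (j m : ℤ) (x : ℝ) : ℝ :=
  if x ∈ Ico ((2:ℝ)^j * (m:ℝ)) ((2:ℝ)^j * ((m:ℝ) + 1/2)) then (2:ℝ) ^ (-(j:ℝ)/2)
  else if x ∈ Ico ((2:ℝ)^j * ((m:ℝ) + 1/2)) ((2:ℝ)^j * ((m:ℝ)+1)) then -(2:ℝ) ^ (-(j:ℝ)/2)
  else 0

/-- The martingale difference projection `Δ_j f` onto Haar functions at scale `2^{1-j}`. -/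
def haarProj (j : ℤ) (f : ℝ → ℝ) (x : ℝ) : ℝ :=
  ∑' m : ℤ, (∫ y, f y * haarFn (1-j) m y) * haarFn (1-j) m x

/-- The pointwise `r`-variation of the Haar martingale of `f`. -/
def varHaar (r : ℝ) (f : ℝ → ℝ) (x : ℝ) : ℝ≥0∞ :=
  ⨆ (M : ℕ) (N : Fin (M + 1) → ℤ) (_ : StrictMono N),
    ENNReal.ofReal ((∑ k : Fin M,
      |∑ j ∈ Finset.Ioc (N k.castSucc) (N k.succ), haarProj j f x| ^ r) ^ (1/r))

/-- The jump counting function `M_λ(x)`. -/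
def jumpCount (f : ℝ → ℝ) (lam : ℝ) (x : ℝ) : ℝ≥0∞ :=
  ⨆ (M : ℕ) (N : Fin (M + 1) → ℤ) (_ : StrictMono N),
    ((Finset.univ.filter (fun k : Fin M =>
      lam < |∑ j ∈ Finset.Ioc (N k.castSucc) (N k.succ), haarProj j f x|)).card : ℝ≥0∞)

/-- The square function of a finite collection of tiles. -/
def tileSq (f : ℝ → ℝ) (Ds : Finset Tile) (x : ℝ) : ℝ :=
  Real.sqrt (∑ p ∈ Ds, (pinner f p)^2 * Set.indicator p.timeI (fun _ => (1:ℝ)) x / p.len)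

/-- The dyadic sharp maximal function. -/
def sharpMax (g : ℝ → ℝ) (x : ℝ) : ℝ≥0∞ :=
  ⨆ (j : ℤ) (m : ℤ) (_ : x ∈ dyadicI j m),
    ⨅ c : ℝ, ENNReal.ofReal ((2:ℝ)^(-j) * ∫ y in dyadicI j m, |g y - c|)

/-- The dyadic `L²` maximal function `M_2`. -/
def M2fn (f : ℝ → ℝ) (x : ℝ) : ℝ≥0∞ :=
  ⨆ (j : ℤ) (m : ℤ) (_ : x ∈ dyadicI j m),
    ENNReal.ofReal (((2:ℝ)^(-j) * ∫ y in dyadicI j m, (f y)^2) ^ (1/2:ℝ))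

/-- The weak `L^{1,∞}(μ)` quasinorm. -/
def wkNorm (g : ℝ → ℝ) (μ : Measure ℝ) : ℝ≥0∞ :=
  ⨆ lam : ℝ, ENNReal.ofReal lam * μ {x | lam < |g x|}

/-!
Walsh packets of disjoint tiles are orthonormal, because on a dyadic subinterval of its time
interval a packet is a multiple of the packet of the tile over that subinterval which it meets. So
Bessel's inequality gives `‖S_D f‖₂ ≤ ‖f‖₂`.

Over a dyadic interval `J`, tiles of `D` whose time interval is not contained in `J` contribute a
constant `c ^ 2` to `(S_D f) ^ 2`, hence `|S_D f - c| ≤ S_{D_J} f` on `J`, where `D_J` collects the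
other tiles. As `S_{D_J}` only sees `f` on `J`, Jensen's inequality and Bessel's inequality for
`f 1_J` bound the mean of `S_{D_J} f` over `J` by `(|J|⁻¹ ∫_J f ^ 2) ^ (1/2)`: the constant is `1`.
-/

lemma integral_comp_mul_sub {E : Type*} [NormedAddCommGroup E] [NormedSpace ℝ E] (g : ℝ → E)
    (a b : ℝ) : ∫ x, g (a * x - b) = |a⁻¹| • ∫ x, g x := by
  rw [Measure.integral_comp_mul_left (fun x => g (x - b)) a, integral_sub_right_eq_self g b]

lemma inner_toLp_toLp {α 𝕜 E : Type*} [MeasurableSpace α] {μ : Measure α} [RCLike 𝕜]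
    [NormedAddCommGroup E] [InnerProductSpace 𝕜 E] {f g : α → E} (hf : MemLp f 2 μ)
    (hg : MemLp g 2 μ) : inner 𝕜 (hf.toLp f) (hg.toLp g) = ∫ x, inner 𝕜 (f x) (g x) ∂μ := by
  rw [L2.inner_def]
  refine integral_congr_ae ?_
  filter_upwards [hf.coeFn_toLp, hg.coeFn_toLp] with x hfx hgx
  rw [hfx, hgx]

lemma sq_average_le_average_sq {α : Type*} [MeasurableSpace α] {μ : Measure α} [IsFiniteMeasure μ]
    {g : α → ℝ} (hg : MemLp g 2 μ) : (⨍ x, g x ∂μ) ^ 2 ≤ ⨍ x, g x ^ 2 ∂μ := by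
  rcases eq_zero_or_neZero μ with rfl | _
  · simp
  · exact even_two.convexOn_pow.map_average_le (continuous_pow 2).continuousOn isClosed_univ
      (.of_forall fun _ => mem_univ _) (hg.integrable one_le_two) hg.integrable_sq

section Walsh

lemma walsh_zero : walsh 0 = (Ico (0 : ℝ) 1).indicator 1 := by
  ext x
  rw [walsh]
  simp [indicator_apply]

lemma walsh_rec (n : ℕ) (x : ℝ) :
    walsh n x = walsh (n / 2) (2 * x) + (-1) ^ n * walsh (n / 2) (2 * x - 1) := by
  by_cases hn : n = 0
  · subst hn
    simp only [Nat.zero_div, walsh_zero, indicator_apply, mem_Ico, Pi.one_apply, pow_zero]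
    grind
  · rw [walsh, dif_neg hn]
    congr 2
    split_ifs with hpar
    · rw [(Nat.even_iff.2 hpar).neg_one_pow]
    · rw [(Nat.odd_iff.2 (Nat.mod_two_ne_zero.1 hpar)).neg_one_pow]

lemma measurable_walsh (n : ℕ) : Measurable (walsh n) := by
  induction n using Nat.strong_induction_on with
  | _ n ih =>
    by_cases hn : n = 0
    · subst hn
      exact walsh_zero ▸ measurable_one.indicator measurableSet_Ico
    · have hhalf : Measurable (walsh (n / 2)) := ih _ (by lia)
      rw [funext (walsh_rec n)]
      exact (hhalf.comp (by fun_prop)).add ((hhalf.comp (by fun_prop)).const_mul _)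

lemma abs_walsh_le_walsh_zero (n : ℕ) (x : ℝ) : |walsh n x| ≤ walsh 0 x := by
  induction n using Nat.strong_induction_on generalizing x with
  | _ n ih =>
    by_cases hn : n = 0
    · subst hn
      exact (abs_of_nonneg (walsh_zero ▸ indicator_nonneg (fun _ _ => zero_le_one) x)).le
    · have hhalf := ih (n / 2) (by lia)
      calc |walsh n x| ≤ |walsh (n / 2) (2 * x)| + |walsh (n / 2) (2 * x - 1)| := by
            rw [walsh_rec n x]
            refine (abs_add_le _ _).trans_eq ?_
            rw [abs_mul, abs_neg_one_pow, one_mul]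
        _ ≤ walsh 0 (2 * x) + walsh 0 (2 * x - 1) := add_le_add (hhalf _) (hhalf _)
        _ = walsh 0 x := by rw [walsh_rec 0 x]; simp

lemma walsh_eq_zero (n : ℕ) {x : ℝ} (hx : x ∉ Ico (0 : ℝ) 1) : walsh n x = 0 := by
  rw [← abs_nonpos_iff]
  exact (abs_walsh_le_walsh_zero n x).trans_eq (by rw [walsh_zero, indicator_of_notMem hx])

lemma memLp_walsh (n : ℕ) (q : ℝ≥0∞) : MemLp (walsh n) q := by
  have hzero : MemLp (walsh 0) q :=
    walsh_zero ▸ memLp_indicator_const q measurableSet_Ico 1 (.inr (by simp))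
  exact hzero.of_le (measurable_walsh n).aestronglyMeasurable <| .of_forall fun x =>
    (abs_walsh_le_walsh_zero n x).trans (le_abs_self _)

lemma integrable_walsh_mul_walsh (m n : ℕ) : Integrable fun x => walsh m x * walsh n x :=
  (memLp_walsh m 2).integrable_mul (memLp_walsh n 2)

lemma walsh_mul_walsh_sub_one (m n : ℕ) (x : ℝ) : walsh m x * walsh n (x - 1) = 0 := by
  by_cases hx : x ∈ Ico (0 : ℝ) 1
  · have hx' : x - 1 ∉ Ico (0 : ℝ) 1 := fun h => by linarith [h.1, hx.2]
    rw [walsh_eq_zero n hx', mul_zero]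
  · rw [walsh_eq_zero m hx, zero_mul]

lemma walsh_mul_walsh_rec (m n : ℕ) (x : ℝ) :
    walsh m x * walsh n x = walsh (m / 2) (2 * x) * walsh (n / 2) (2 * x) +
      (-1) ^ (m + n) * (walsh (m / 2) (2 * x - 1) * walsh (n / 2) (2 * x - 1)) := by
  rw [walsh_rec m, walsh_rec n]
  linear_combination (-1) ^ n * walsh_mul_walsh_sub_one (m / 2) (n / 2) (2 * x) +
    (-1) ^ m * walsh_mul_walsh_sub_one (n / 2) (m / 2) (2 * x)

lemma integral_walsh_mul_walsh_rec (m n : ℕ) :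
    ∫ x, walsh m x * walsh n x =
      (1 + (-1) ^ (m + n)) / 2 * ∫ x, walsh (m / 2) x * walsh (n / 2) x := by
  have hint := integrable_walsh_mul_walsh (m / 2) (n / 2)
  have hleft : Integrable fun x => walsh (m / 2) (2 * x) * walsh (n / 2) (2 * x) :=
    hint.comp_mul_left' two_ne_zero
  have hright : Integrable fun x => walsh (m / 2) (2 * x - 1) * walsh (n / 2) (2 * x - 1) :=
    (hint.comp_sub_right 1).comp_mul_left' two_ne_zero
  simp_rw [walsh_mul_walsh_rec m n]
  rw [integral_add hleft (hright.const_mul _), integral_const_mul,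
    integral_comp_mul_sub (fun x => walsh (m / 2) x * walsh (n / 2) x) 2 1,
    Measure.integral_comp_mul_left (fun x => walsh (m / 2) x * walsh (n / 2) x) 2,
    abs_of_pos (by norm_num), smul_eq_mul]
  ring

lemma integral_walsh_mul_walsh (m n : ℕ) :
    ∫ x, walsh m x * walsh n x = if m = n then 1 else 0 := by
  induction hs : m + n using Nat.strong_induction_on generalizing m n with
  | _ s ih =>
    rcases Nat.eq_zero_or_pos s with hs0 | hpos
    · obtain ⟨rfl, rfl⟩ : m = 0 ∧ n = 0 := by lia
      simp_rw [walsh_zero, ← inter_indicator_mul, inter_self]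
      simp [integral_indicator_const]
    · rw [integral_walsh_mul_walsh_rec, ih _ (by lia) (m / 2) (n / 2) rfl]
      by_cases hpar : Even (m + n)
      · have hiff : m / 2 = n / 2 ↔ m = n := by grind
        simp [hpar.neg_one_pow, hiff]
      · have hne : m ≠ n := by grind
        simp [(Nat.not_even_iff_odd.1 hpar).neg_one_pow, hne]

end Walsh

section Dyadic

lemma mem_dyadicI_iff {j m : ℤ} {x : ℝ} : x ∈ dyadicI j m ↔ ⌊(2 : ℝ) ^ (-j) * x⌋ = m := by
  have hpos : (0 : ℝ) < 2 ^ j := by positivity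
  rw [Int.floor_eq_iff, dyadicI, mem_Ico, zpow_neg, inv_mul_eq_div, le_div_iff₀ hpos,
    div_lt_iff₀ hpos, mul_comm _ (m : ℝ), mul_comm _ ((m : ℝ) + 1)]

lemma eq_of_mem_dyadicI {j m m' : ℤ} {x : ℝ} (hx : x ∈ dyadicI j m) (hx' : x ∈ dyadicI j m') :
    m = m' :=
  (mem_dyadicI_iff.1 hx).symm.trans (mem_dyadicI_iff.1 hx')

lemma dyadicI_subset_ancestor (j m : ℤ) (k : ℕ) : dyadicI j m ⊆ dyadicI (j + k) (m / 2 ^ k) := by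
  intro x hx
  have hscale : (2 : ℝ) ^ (-(j + k)) * x = (2 : ℝ) ^ (-j) * x / (2 ^ k : ℕ) := by
    rw [neg_add, zpow_add₀ two_ne_zero, zpow_neg 2 (k : ℤ), zpow_natCast]
    push_cast
    field_simp
  rw [mem_dyadicI_iff] at hx ⊢
  rw [hscale, Int.floor_div_natCast, hx]
  push_cast
  rfl

lemma dyadicI_subset_of_mem {j j' m m' : ℤ} (hj : j ≤ j') {x : ℝ} (hx : x ∈ dyadicI j m)
    (hx' : x ∈ dyadicI j' m') : dyadicI j m ⊆ dyadicI j' m' := by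
  obtain ⟨k, rfl⟩ := Int.le.dest hj
  rw [← eq_of_mem_dyadicI (dyadicI_subset_ancestor j m k hx) hx']
  exact dyadicI_subset_ancestor j m k

lemma measurableSet_dyadicI (j m : ℤ) : MeasurableSet (dyadicI j m) := measurableSet_Ico

lemma volume_dyadicI_ne_top (j m : ℤ) : volume (dyadicI j m) ≠ ∞ := by
  simp [dyadicI]

lemma volume_real_dyadicI (j m : ℤ) : volume.real (dyadicI j m) = 2 ^ j := by
  have hpos : (0 : ℝ) < 2 ^ j := by positivity
  rw [dyadicI, Real.volume_real_Ico_of_le (by nlinarith)]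
  ring

lemma nonempty_dyadicI (j m : ℤ) : (dyadicI j m).Nonempty :=
  nonempty_Ico.2 (by gcongr; linarith)

lemma setAverage_dyadicI (j m : ℤ) (g : ℝ → ℝ) :
    ⨍ y in dyadicI j m, g y = (2 : ℝ) ^ (-j) * ∫ y in dyadicI j m, g y := by
  rw [setAverage_eq, volume_real_dyadicI, zpow_neg, smul_eq_mul]

end Dyadic

namespace Tile

lemma timeI_eq_dyadicI (p : Tile) : p.timeI = dyadicI p.j p.m := by
  simp [timeI, dyadicI]

lemma freqI_eq_dyadicI (p : Tile) : p.freqI = dyadicI (-p.j) p.n := by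
  simp [freqI, dyadicI]

lemma measurableSet_timeI (p : Tile) : MeasurableSet p.timeI := measurableSet_Ico

lemma mem_timeI_iff {p : Tile} {x : ℝ} :
    x ∈ p.timeI ↔ (2 : ℝ) ^ (-p.j) * x - p.m ∈ Ico (0 : ℝ) 1 := by
  rw [timeI_eq_dyadicI, mem_dyadicI_iff, Int.floor_eq_iff, mem_Ico, sub_nonneg, sub_lt_iff_lt_add']
  push_cast
  rfl

lemma timeI_subset_dyadicI_or_mem_iff_mem (p : Tile) {j m : ℤ} {x y : ℝ} (hx : x ∈ dyadicI j m)
    (hy : y ∈ dyadicI j m) : p.timeI ⊆ dyadicI j m ∨ (x ∈ p.timeI ↔ y ∈ p.timeI) := by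
  rw [timeI_eq_dyadicI]
  rcases le_total p.j j with hj | hj
  · by_cases hmeet : x ∈ dyadicI p.j p.m ∨ y ∈ dyadicI p.j p.m
    · exact .inl (hmeet.elim (dyadicI_subset_of_mem hj · hx) (dyadicI_subset_of_mem hj · hy))
    · exact .inr (by tauto)
  · exact .inr
      ⟨fun h => dyadicI_subset_of_mem hj hx h hy, fun h => dyadicI_subset_of_mem hj hy h hx⟩

lemma integrable_indicator_timeI_const (p : Tile) (c : ℝ) :
    Integrable (p.timeI.indicator fun _ => c) :=
  (integrableOn_const (by simp [timeI])).integrable_indicator p.measurableSet_timeI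

lemma not_disjoint_rect_ancestor (j : ℤ) (m n k : ℕ) :
    ¬ Disjoint (rect ⟨j, m, n / 2 ^ k⟩) (rect ⟨j + k, m / 2 ^ k, n⟩) := by
  have htime : timeI ⟨j, m, n / 2 ^ k⟩ ⊆ timeI ⟨j + k, m / 2 ^ k, n⟩ := by
    simpa [timeI_eq_dyadicI] using dyadicI_subset_ancestor j m k
  have hfreq : freqI ⟨j + k, m / 2 ^ k, n⟩ ⊆ freqI ⟨j, m, n / 2 ^ k⟩ := by
    simpa [freqI_eq_dyadicI] using dyadicI_subset_ancestor (-(j + k)) n k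
  obtain ⟨x, hx⟩ := nonempty_dyadicI j m
  obtain ⟨ξ, hξ⟩ := nonempty_dyadicI (-(j + k)) n
  rw [← timeI_eq_dyadicI ⟨j, m, n / 2 ^ k⟩] at hx
  rw [← freqI_eq_dyadicI ⟨j + k, m / 2 ^ k, n⟩] at hξ
  exact not_disjoint_iff.2 ⟨(x, ξ), ⟨hx, hfreq hξ⟩, htime hx, hξ⟩

lemma measurable_packet (p : Tile) : Measurable p.packet :=
  ((measurable_walsh p.n).comp (by fun_prop)).const_mul _

lemma abs_packet_le (p : Tile) (x : ℝ) :
    |p.packet x| ≤ p.timeI.indicator (fun _ => (2 : ℝ) ^ (-(p.j : ℝ) / 2)) x := by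
  have hpos : (0 : ℝ) < 2 ^ (-(p.j : ℝ) / 2) := by positivity
  rw [packet, abs_mul, abs_of_pos hpos]
  refine (mul_le_mul_of_nonneg_left (abs_walsh_le_walsh_zero _ _) hpos.le).trans_eq ?_
  simp [walsh_zero, indicator_apply, mem_timeI_iff]

lemma packet_eq_zero (p : Tile) {x : ℝ} (hx : x ∉ p.timeI) : p.packet x = 0 := by
  rw [← abs_nonpos_iff]
  exact (p.abs_packet_le x).trans_eq (indicator_of_notMem hx _)

lemma memLp_packet (p : Tile) (q : ℝ≥0∞) : MemLp p.packet q := by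
  have hind : MemLp (p.timeI.indicator fun _ => (2 : ℝ) ^ (-(p.j : ℝ) / 2)) q :=
    memLp_indicator_const q p.measurableSet_timeI _ (.inr (by simp [timeI]))
  exact hind.of_le p.measurable_packet.aestronglyMeasurable <| .of_forall fun x =>
    (p.abs_packet_le x).trans (le_abs_self _)

lemma integral_packet_mul_packet_of_same_timeI (j : ℤ) (m n n' : ℕ) :
    ∫ x, packet ⟨j, m, n⟩ x * packet ⟨j, m, n'⟩ x = if n = n' then 1 else 0 := by
  have hnorm : (2 : ℝ) ^ (-(j : ℝ) / 2) * (2 : ℝ) ^ (-(j : ℝ) / 2) = (2 : ℝ) ^ (-j) := by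
    rw [← Real.rpow_add two_pos, add_halves, ← Int.cast_neg, Real.rpow_intCast]
  simp_rw [packet, mul_mul_mul_comm, hnorm]
  rw [integral_const_mul, integral_comp_mul_sub (fun y => walsh n y * walsh n' y),
    integral_walsh_mul_walsh, abs_of_pos (by positivity), smul_eq_mul,
    mul_inv_cancel_left₀ (by positivity)]

lemma packet_rec (j : ℤ) (m n : ℕ) (x : ℝ) :
    packet ⟨j + 1, m, n⟩ x = (2 : ℝ) ^ (-(1 / 2) : ℝ) *
      (packet ⟨j, 2 * m, n / 2⟩ x + (-1) ^ n * packet ⟨j, 2 * m + 1, n / 2⟩ x) := by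
  have hnorm : (2 : ℝ) ^ (-((j + 1 : ℤ) : ℝ) / 2) =
      (2 : ℝ) ^ (-(1 / 2) : ℝ) * (2 : ℝ) ^ (-(j : ℝ) / 2) := by
    rw [← Real.rpow_add two_pos]
    push_cast
    ring_nf
  have hscale : 2 * ((2 : ℝ) ^ (-(j + 1)) * x) = (2 : ℝ) ^ (-j) * x := by
    rw [neg_add, zpow_add₀ two_ne_zero, zpow_neg_one]
    ring
  simp only [packet, hnorm, walsh_rec n, mul_sub, hscale]
  push_cast
  rw [sub_sub]
  ring

lemma exists_packet_eq_mul_packet_child (j : ℤ) (m n : ℕ) :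
    ∃ c : ℝ, ∀ x ∈ dyadicI j m,
      packet ⟨j + 1, m / 2, n⟩ x = c * packet ⟨j, m, n / 2⟩ x := by
  have hvanish {m' : ℕ} (hm : m' ≠ m) {x : ℝ} (hx : x ∈ dyadicI j m) :
      packet ⟨j, m', n / 2⟩ x = 0 := by
    refine packet_eq_zero _ fun hx' => hm ?_
    rw [timeI_eq_dyadicI] at hx'
    exact_mod_cast eq_of_mem_dyadicI hx' hx
  rcases Nat.even_or_odd' m with ⟨i, hi | hi⟩
  · have hhalf : m / 2 = i := by lia
    refine ⟨(2 : ℝ) ^ (-(1 / 2) : ℝ), fun x hx => ?_⟩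
    rw [packet_rec, hhalf, hvanish (m' := 2 * i + 1) (by lia) hx, ← hi, mul_zero, add_zero]
  · have hhalf : m / 2 = i := by lia
    refine ⟨(2 : ℝ) ^ (-(1 / 2) : ℝ) * (-1) ^ n, fun x hx => ?_⟩
    rw [packet_rec, hhalf, hvanish (m' := 2 * i) (by lia) hx, ← hi, zero_add, mul_assoc]

lemma exists_packet_ancestor_eq_mul_packet (j : ℤ) (m n k : ℕ) :
    ∃ c : ℝ, ∀ x ∈ dyadicI j m,
      packet ⟨j + k, m / 2 ^ k, n⟩ x = c * packet ⟨j, m, n / 2 ^ k⟩ x := by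
  induction k generalizing n with
  | zero => exact ⟨1, by simp⟩
  | succ k ih =>
    obtain ⟨c, hc⟩ := exists_packet_eq_mul_packet_child (j + k) (m / 2 ^ k) n
    obtain ⟨c', hc'⟩ := ih (n / 2)
    refine ⟨c * c', fun x hx => ?_⟩
    have hparent : x ∈ dyadicI (j + k) (m / 2 ^ k : ℕ) := by
      simpa using dyadicI_subset_ancestor j m k hx
    have hm : m / 2 ^ (k + 1) = m / 2 ^ k / 2 := by rw [pow_succ, Nat.div_div_eq_div_mul]
    have hn : n / 2 ^ (k + 1) = n / 2 / 2 ^ k := by rw [pow_succ', Nat.div_div_eq_div_mul]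
    rw [Nat.cast_succ, ← add_assoc, hm, hn, hc x hparent, hc' x hx, mul_assoc]

lemma integral_packet_mul_packet_eq_zero_of_le {p q : Tile} (hj : p.j ≤ q.j)
    (hpq : Disjoint p.rect q.rect) : ∫ x, p.packet x * q.packet x = 0 := by
  obtain ⟨j, m, n⟩ := p
  obtain ⟨j', m', n'⟩ := q
  obtain ⟨k, rfl⟩ : ∃ k : ℕ, j + k = j' := Int.le.dest hj
  by_cases hm : m' = m / 2 ^ k
  · subst hm
    have hn : n ≠ n' / 2 ^ k := by
      rintro rfl
      exact not_disjoint_rect_ancestor j m n' k hpq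
    obtain ⟨c, hc⟩ := exists_packet_ancestor_eq_mul_packet j m n' k
    have hmul (x : ℝ) : packet ⟨j, m, n⟩ x * packet ⟨j + k, m / 2 ^ k, n'⟩ x =
        c * (packet ⟨j, m, n⟩ x * packet ⟨j, m, n' / 2 ^ k⟩ x) := by
      by_cases hx : x ∈ timeI ⟨j, m, n⟩
      · rw [hc x (timeI_eq_dyadicI ⟨j, m, n⟩ ▸ hx), mul_left_comm]
      · rw [packet_eq_zero _ hx, zero_mul, zero_mul, mul_zero]
    simp_rw [hmul]
    rw [integral_const_mul, integral_packet_mul_packet_of_same_timeI, if_neg hn, mul_zero]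
  · refine integral_eq_zero_of_ae (.of_forall fun x => mul_eq_zero.2 ?_)
    by_contra! hne
    have hx : x ∈ dyadicI j m :=
      timeI_eq_dyadicI ⟨j, m, n⟩ ▸ not_imp_comm.1 (packet_eq_zero _) hne.1
    have hx' : x ∈ dyadicI (j + k) m' :=
      timeI_eq_dyadicI ⟨j + k, m', n'⟩ ▸ not_imp_comm.1 (packet_eq_zero _) hne.2
    exact hm (by exact_mod_cast eq_of_mem_dyadicI hx' (dyadicI_subset_ancestor j m k hx))

lemma integral_packet_mul_packet_eq_zero {p q : Tile} (hpq : Disjoint p.rect q.rect) :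
    ∫ x, p.packet x * q.packet x = 0 := by
  rcases le_total p.j q.j with hj | hj
  · exact integral_packet_mul_packet_eq_zero_of_le hj hpq
  · simp_rw [mul_comm (p.packet _)]
    exact integral_packet_mul_packet_eq_zero_of_le hj hpq.symm

end Tile

section Bessel

lemma orthonormal_toLp_packet {D : Set Tile} (hD : D.PairwiseDisjoint Tile.rect) :
    Orthonormal ℝ fun p : D => (p.1.memLp_packet 2).toLp p.1.packet := by
  rw [orthonormal_iff_ite]
  intro p q
  simp only [inner_toLp_toLp, RCLike.inner_apply, conj_trivial]
  split_ifs with hpq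
  · subst hpq
    exact (Tile.integral_packet_mul_packet_of_same_timeI _ _ _ _).trans (if_pos rfl)
  · exact Tile.integral_packet_mul_packet_eq_zero
      (hD q.2 p.2 fun h => hpq (Subtype.ext h.symm))

lemma sum_sq_pinner_le {Ds : Finset Tile} (hD : (Ds : Set Tile).PairwiseDisjoint Tile.rect)
    {f : ℝ → ℝ} (hf : MemLp f 2) : ∑ p ∈ Ds, pinner f p ^ 2 ≤ ∫ y, f y ^ 2 := by
  have hcoeff (p : Tile) : inner ℝ ((p.memLp_packet 2).toLp p.packet) (hf.toLp f) = pinner f p := by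
    simp [inner_toLp_toLp, pinner]
  have hnorm : ‖hf.toLp f‖ ^ 2 = ∫ y, f y ^ 2 := by
    rw [← real_inner_self_eq_norm_sq, inner_toLp_toLp]
    simp [sq]
  have hbessel := (orthonormal_toLp_packet hD).sum_inner_products_le (hf.toLp f)
    (s := Finset.univ)
  simp only [hcoeff, hnorm, Real.norm_eq_abs, sq_abs] at hbessel
  rwa [← Finset.sum_coe_sort]

end Bessel

section SquareFunction

variable (f : ℝ → ℝ) (Ds : Finset Tile)

lemma tileSq_nonneg (y : ℝ) : 0 ≤ tileSq f Ds y := Real.sqrt_nonneg _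

lemma sq_tileSq (y : ℝ) :
    tileSq f Ds y ^ 2 = ∑ p ∈ Ds, p.timeI.indicator (fun _ => pinner f p ^ 2 / p.len) y := by
  have hterm (p : Tile) : pinner f p ^ 2 * p.timeI.indicator (fun _ => (1 : ℝ)) y / p.len =
      p.timeI.indicator (fun _ => pinner f p ^ 2 / p.len) y := by
    by_cases hy : y ∈ p.timeI <;> simp [hy]
  simp_rw [tileSq, hterm]
  refine Real.sq_sqrt (Finset.sum_nonneg fun p _ => indicator_nonneg (fun _ _ => ?_) y)
  have : 0 < p.len := zpow_pos two_pos _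
  positivity

lemma measurable_tileSq : Measurable (tileSq f Ds) :=
  (Finset.measurable_sum _ fun p _ =>
    ((measurable_const.indicator p.measurableSet_timeI).const_mul _).div_const _).sqrt

lemma memLp_tileSq : MemLp (tileSq f Ds) 2 := by
  rw [memLp_two_iff_integrable_sq (measurable_tileSq f Ds).aestronglyMeasurable]
  simp_rw [sq_tileSq]
  exact integrable_finsetSum _ fun p _ => p.integrable_indicator_timeI_const _

lemma integral_sq_tileSq : ∫ y, tileSq f Ds y ^ 2 = ∑ p ∈ Ds, pinner f p ^ 2 := by
  simp_rw [sq_tileSq]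
  rw [integral_finsetSum _ fun p _ => p.integrable_indicator_timeI_const _]
  refine Finset.sum_congr rfl fun p _ => ?_
  rw [integral_indicator_const _ p.measurableSet_timeI, p.timeI_eq_dyadicI, volume_real_dyadicI]
  exact mul_div_cancel₀ _ (zpow_ne_zero _ two_ne_zero)

variable {f Ds}

lemma integral_sq_tileSq_le (hD : (Ds : Set Tile).PairwiseDisjoint Tile.rect) (hf : MemLp f 2) :
    ∫ y, tileSq f Ds y ^ 2 ≤ ∫ y, f y ^ 2 :=
  (integral_sq_tileSq f Ds).trans_le (sum_sq_pinner_le hD hf)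

lemma pinner_indicator {p : Tile} {J : Set ℝ} (hp : p.timeI ⊆ J) :
    pinner (J.indicator f) p = pinner f p := by
  refine integral_congr_ae (.of_forall fun y => ?_)
  by_cases hy : y ∈ p.timeI
  · simp [hp hy]
  · simp [p.packet_eq_zero hy]

lemma tileSq_indicator {J : Set ℝ} (hJ : ∀ p ∈ Ds, p.timeI ⊆ J) :
    tileSq (J.indicator f) Ds = tileSq f Ds := by
  ext y
  unfold tileSq
  congr 1
  exact Finset.sum_congr rfl fun p hp => by rw [pinner_indicator (hJ p hp)]

lemma setIntegral_sq_tileSq_le (hD : (Ds : Set Tile).PairwiseDisjoint Tile.rect) {J : Set ℝ}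
    (hJm : MeasurableSet J) (hJ : ∀ p ∈ Ds, p.timeI ⊆ J) (hf : MemLp f 2 (volume.restrict J)) :
    ∫ y in J, tileSq f Ds y ^ 2 ≤ ∫ y in J, f y ^ 2 :=
  calc ∫ y in J, tileSq f Ds y ^ 2 ≤ ∫ y, tileSq f Ds y ^ 2 :=
        setIntegral_le_integral (memLp_tileSq f Ds).integrable_sq
          (.of_forall fun _ => sq_nonneg _)
    _ = ∫ y, tileSq (J.indicator f) Ds y ^ 2 := by rw [tileSq_indicator hJ]
    _ ≤ ∫ y, J.indicator f y ^ 2 :=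
        integral_sq_tileSq_le hD ((memLp_indicator_iff_restrict hJm).2 hf)
    _ = ∫ y in J, f y ^ 2 := by
        rw [← integral_indicator hJm]
        congr 1 with y
        by_cases hy : y ∈ J <;> simp [hy]

lemma tileSq_congr {x y : ℝ} (hxy : ∀ p ∈ Ds, (x ∈ p.timeI ↔ y ∈ p.timeI)) :
    tileSq f Ds x = tileSq f Ds y := by
  unfold tileSq
  congr 1
  exact Finset.sum_congr rfl fun p hp => by simp only [indicator_apply, hxy p hp]

lemma abs_tileSq_sub_tileSq_filter_not_le (P : Tile → Prop) (y : ℝ) :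
    |tileSq f Ds y - tileSq f {p ∈ Ds | ¬ P p} y| ≤ tileSq f {p ∈ Ds | P p} y := by
  have hsplit : tileSq f {p ∈ Ds | P p} y ^ 2 + tileSq f {p ∈ Ds | ¬ P p} y ^ 2 =
      tileSq f Ds y ^ 2 := by
    simp_rw [sq_tileSq]
    exact Finset.sum_filter_add_sum_filter_not _ _ _
  have hmono : tileSq f {p ∈ Ds | ¬ P p} y ≤ tileSq f Ds y :=
    (pow_le_pow_iff_left₀ (tileSq_nonneg f _ y) (tileSq_nonneg f _ y) two_ne_zero).1
      (hsplit ▸ le_add_of_nonneg_left (sq_nonneg _))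
  refine abs_le_of_sq_le_sq ?_ (tileSq_nonneg f _ y)
  nlinarith [mul_nonneg (tileSq_nonneg f {p ∈ Ds | ¬ P p} y) (sub_nonneg.2 hmono)]

lemma abs_tileSq_sub_tileSq_not_subset_le {j m : ℤ} {x y : ℝ} (hx : x ∈ dyadicI j m)
    (hy : y ∈ dyadicI j m) :
    |tileSq f Ds y - tileSq f {p ∈ Ds | ¬ p.timeI ⊆ dyadicI j m} x| ≤
      tileSq f {p ∈ Ds | p.timeI ⊆ dyadicI j m} y := by
  rw [tileSq_congr (y := y) fun p hp =>
    (p.timeI_subset_dyadicI_or_mem_iff_mem hx hy).resolve_left (Finset.mem_filter.1 hp).2]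
  exact abs_tileSq_sub_tileSq_filter_not_le _ y

end SquareFunction

lemma exists_setAverage_abs_tileSq_sub_le {Ds : Finset Tile}
    (hD : (Ds : Set Tile).PairwiseDisjoint Tile.rect) {f : ℝ → ℝ} {j m : ℤ}
    (hf : MemLp f 2 (volume.restrict (dyadicI j m))) :
    ∃ c : ℝ, ⨍ y in dyadicI j m, |tileSq f Ds y - c| ≤ √(⨍ y in dyadicI j m, f y ^ 2) := by
  obtain ⟨x, hx⟩ := nonempty_dyadicI j m
  set J := dyadicI j m with hJ
  have hJm : MeasurableSet J := measurableSet_dyadicI j m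
  have : IsFiniteMeasure (volume.restrict J) :=
    isFiniteMeasure_restrict.2 (volume_dyadicI_ne_top j m)
  set DJ := {p ∈ Ds | p.timeI ⊆ J}
  have hS : MemLp (tileSq f DJ) 2 (volume.restrict J) := (memLp_tileSq f DJ).restrict J
  refine ⟨tileSq f {p ∈ Ds | ¬ p.timeI ⊆ J} x, ?_⟩
  calc ⨍ y in J, |tileSq f Ds y - tileSq f {p ∈ Ds | ¬ p.timeI ⊆ J} x|
      ≤ ⨍ y in J, tileSq f DJ y := by
        rw [hJ, setAverage_dyadicI, setAverage_dyadicI]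
        refine mul_le_mul_of_nonneg_left ?_ (by positivity)
        refine integral_mono_of_nonneg (.of_forall fun _ => abs_nonneg _)
          (hS.integrable one_le_two) ?_
        filter_upwards [ae_restrict_mem hJm] with y hy
        exact abs_tileSq_sub_tileSq_not_subset_le hx hy
    _ ≤ √(⨍ y in J, tileSq f DJ y ^ 2) := Real.le_sqrt_of_sq_le (sq_average_le_average_sq hS)
    _ ≤ √(⨍ y in J, f y ^ 2) := by
        rw [hJ, setAverage_dyadicI, setAverage_dyadicI]
        gcongr √(_ * ?_)
        exact setIntegral_sq_tileSq_le (hD.subset (Finset.coe_subset.2 (Finset.filter_subset _ _)))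
          hJm (fun p hp => (Finset.mem_filter.1 hp).2) hf

theorem sharp_bound_disjoint_tiles_general {Ds : Finset Tile}
    (hD : (Ds : Set Tile).PairwiseDisjoint Tile.rect) {f : ℝ → ℝ}
    (hf : AEStronglyMeasurable f) (hf2 : LocallyIntegrable fun y => f y ^ 2) (x : ℝ) :
    sharpMax (tileSq f Ds) x ≤ M2fn f x := by
  refine iSup_le fun j => iSup_le fun m => iSup_le fun hx => ?_
  have hfJ : MemLp f 2 (volume.restrict (dyadicI j m)) :=
    (memLp_two_iff_integrable_sq hf.restrict).2 <|
      (hf2.integrableOn_isCompact isCompact_Icc).mono_set Ico_subset_Icc_self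
  obtain ⟨c, hc⟩ := exists_setAverage_abs_tileSq_sub_le hD hfJ
  rw [setAverage_dyadicI, setAverage_dyadicI, Real.sqrt_eq_rpow] at hc
  exact (iInf_le _ c).trans <| (ENNReal.ofReal_le_ofReal hc).trans <|
    le_iSup₂_of_le j m (le_iSup_of_le hx le_rfl)

/-- sharp function bound, estimate (4.4): for a finite collection `Ds`
of pairwise disjoint tiles, `(S_Ds f)^♯ ≤ C M_2 f` pointwise, with an absolute constant. -/
theorem sharp_bound_disjoint_tiles :
    ∃ C : ℝ, 0 < C ∧
    ∀ Ds : Finset Tile, (∀ p ∈ Ds, ∀ p' ∈ Ds, p ≠ p' → p.rect ∩ p'.rect = ∅) →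
    ∀ f : ℝ → ℝ, Measurable f → LocallyIntegrable (fun y => (f y)^2) volume →
    ∀ x : ℝ, sharpMax (tileSq f Ds) x ≤ ENNReal.ofReal C * M2fn f x := by
  refine ⟨1, one_pos, fun Ds hD f hf hf2 x => ?_⟩
  rw [ENNReal.ofReal_one, one_mul]
  exact sharp_bound_disjoint_tiles_general
    (fun p hp q hq hpq => disjoint_iff_inter_eq_empty.2 (hD p hp q hq hpq))
    hf.aestronglyMeasurable hf2 x
end Paper
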